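/- There exists a constant c such that for every natural number n, every binary string x of length n, and every finite nonempty set S of binary strings with x ∈ S and C(S) ≤ n, the time-bounded complexity satisfies C^{B(C(S) + c·log(n+2))}(x) ≤ C(S) + log|S| + c·log(n+2). (A two-part description based on a model S of complexity k can be converted into a program of essentially the same total length that halts within time B(k + O(log n)).) -/

import Mathlib

open scoped Classical

/-- Binary strings: finite sequences over `{0,1}`. -/
abbrev BStr := List Bool

/-- Complexity of `x` with respect to the description method `D`:
the minimal length of a `p` with `D(p) = x`, as an extended natural
(`⊤` if no such `p` exists). -/
noncomputable def Cw (D : BStr →. BStr) (x : BStr) : ℕ∞ :=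
  ⨅ (p : BStr) (_ : x ∈ D p), (p.length : ℕ∞)

/-- A description method is optimal if it is partial computable and gives
complexity at most that of any other partial computable description method,
up to an additive constant. -/
def OptimalDM (D : BStr →. BStr) : Prop :=
  Partrec D ∧ ∀ D' : BStr →. BStr, Partrec D' →
    ∃ c : ℕ, ∀ x : BStr, Cw D x ≤ Cw D' x + (c : ℕ∞)

/-- Plain Kolmogorov complexity (finite value) w.r.t. a description method. -/
noncomputable def C (D : BStr →. BStr) (x : BStr) : ℕ := (Cw D x).toNat

/-- Conditional complexity of `x` given `y` w.r.t. the conditional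
description method `E`. -/
noncomputable def CwCond (E : BStr → BStr →. BStr) (x y : BStr) : ℕ∞ :=
  ⨅ (p : BStr) (_ : x ∈ E p y), (p.length : ℕ∞)

/-- Optimal conditional description method. -/
def OptimalCDM (E : BStr → BStr →. BStr) : Prop :=
  Partrec₂ E ∧ ∀ E' : BStr → BStr →. BStr, Partrec₂ E' →
    ∃ c : ℕ, ∀ x y : BStr, CwCond E x y ≤ CwCond E' x y + (c : ℕ∞)

/-- Conditional Kolmogorov complexity (finite value). -/
noncomputable def Ccond (E : BStr → BStr →. BStr) (x y : BStr) : ℕ :=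
  (CwCond E x y).toNat

/-- `enc` is a computable injective encoding of finite sets of binary strings
as binary strings (computability is expressed on the level of lists of
elements, since every finite set is the set of members of a list). -/
def SetEncoding (enc : Finset BStr → BStr) : Prop :=
  Function.Injective enc ∧ Computable (fun l : List BStr => enc l.toFinset)

/-- A computable step-counting semantics for the description method `D`:
`ev t p` is the output of `D` on program `p` within `t` computation steps
(`none` if the computation has not converged within `t` steps). -/
structure TimedDM (D : BStr →. BStr) where
  ev : ℕ → BStr → Option BStr
  computable : Computable₂ ev
  mono : ∀ {t t' : ℕ} {p y : BStr}, t ≤ t' → ev t p = some y → ev t' p = some y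
  spec : ∀ p y : BStr, y ∈ D p ↔ ∃ t : ℕ, ev t p = some y

/-- Time-bounded complexity `C^t(x)`: the minimal length of a program
producing `x` within `t` steps (`⊤` if there is none). -/
noncomputable def Cwt (ev : ℕ → BStr → Option BStr) (t : ℕ) (x : BStr) : ℕ∞ :=
  ⨅ (p : BStr) (_ : ev t p = some x), (p.length : ℕ∞)

/-- `B D k`: the largest natural number whose binary representation has
complexity at most `k` (naturals are identified with their binary
representations via `Nat.bits`). -/
noncomputable def B (D : BStr →. BStr) (k : ℕ) : ℕ :=
  sSup {m : ℕ | Cw D (Nat.bits m) ≤ (k : ℕ∞)}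

/-- Kolmogorov's `(α,β)`-stochasticity: `x` belongs to a finite set `S` of
complexity at most `α` in which it is random up to `β`. -/
def Stochastic (D : BStr →. BStr) (enc : Finset BStr → BStr)
    (α β : ℕ) (x : BStr) : Prop :=
  ∃ S : Finset BStr, x ∈ S ∧ C D (enc S) ≤ α ∧
    Real.logb 2 S.card - β ≤ (C D x : ℝ)

/-- The binary entropy function (with the convention `H(0) = H(1) = 0`,
which holds automatically since `logb 2 0 = 0` in Mathlib). -/
noncomputable def binH (p : ℝ) : ℝ :=
  -(p * Real.logb 2 p) - (1 - p) * Real.logb 2 (1 - p)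

/-!
A shortest program `q` for (the code of) `S` yields a duplicate-free list of the elements of `S`,
and an element is described by `q`, made self-delimiting at a cost of `2 log |q|` bits, together
with its index in the list. The optimal method `D` therefore has programs of this length, up to a
constant, for all elements of `S`. The least time `t` by which such short programs have halted on
every element can be found by search from `q` alone, so the complexity of `t` is at most
`C(S) + O(1)` and `t ≤ B(C(S) + O(1))`.
-/

/-! ### Primitive recursive and computable operations -/

section Computability

variable {α β : Type*} [Primcodable α] [Primcodable β]

theorem primrec_list_dedup [DecidableEq α] : Primrec (List.dedup : List α → List α) := by
  have hmem : PrimrecRel fun (l : List α) (a : α) => a ∈ l :=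
    (PrimrecRel.exists_mem_list (Primrec.eq (α := α))).of_eq fun l a => by simp
  have hstep : Primrec₂ fun (_ : List α) (p : α × List α) =>
      if p.1 ∈ p.2 then p.2 else p.1 :: p.2 :=
    Primrec.ite (hmem.comp (Primrec.snd.comp Primrec.snd) (Primrec.fst.comp Primrec.snd))
      (Primrec.snd.comp Primrec.snd)
      (Primrec.list_cons.comp (Primrec.fst.comp Primrec.snd) (Primrec.snd.comp Primrec.snd))
  refine (Primrec.list_foldr Primrec.id (Primrec.const []) hstep).of_eq fun l => ?_
  induction l with
  | nil => rfl
  | cons a l ih =>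
    simp only [id_eq] at ih
    simp only [id_eq, List.foldr_cons, ih, List.dedup_cons']

theorem primrec_list_replicate (a : α) : Primrec fun n => List.replicate n a :=
  (Primrec.list_map Primrec.list_range (Primrec.const a).to₂).of_eq fun n => by simp

theorem bits_injective : Function.Injective Nat.bits := fun m n h =>
  Nat.eq_of_testBit_eq fun i => by rw [Nat.testBit_eq_inth, Nat.testBit_eq_inth, h]

theorem bits_eq_bodd_cons_bits_div2 {n : ℕ} (hn : n ≠ 0) : n.bits = n.bodd :: n.div2.bits := by
  rw [Nat.bodd_eq_bits_head, Nat.div2_bits_eq_tail]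
  cases h : n.bits with
  | nil => exact absurd (bits_injective (h.trans Nat.zero_bits.symm)) hn
  | cons b l => rfl

theorem primrec_nat_bits : Primrec Nat.bits := by
  -- `bits n` is read off the list of the values `bits m`, `m < n`, whose length is `n`.
  have hstep : Primrec₂ fun (_ : Unit) (L : List (List Bool)) =>
      if L.length = 0 then some [] else L[L.length.div2]?.map (L.length.bodd :: ·) := by
    have hlen : Primrec fun z : Unit × List (List Bool) => z.2.length :=
      Primrec.list_length.comp Primrec.snd
    refine Primrec.ite (Primrec.eq.comp hlen (Primrec.const 0)) (Primrec.const _) ?_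
    exact Primrec.option_map (Primrec.list_getElem?.comp Primrec.snd (Primrec.nat_div2.comp hlen))
      (Primrec.list_cons.comp (Primrec.nat_bodd.comp (hlen.comp Primrec.fst)) Primrec.snd)
  refine (Primrec.nat_strong_rec (fun (_ : Unit) n => Nat.bits n) hstep fun _ n => ?_).comp
    (Primrec.const ()) Primrec.id
  rcases Nat.eq_zero_or_pos n with rfl | hn
  · simp
  · have hdiv : n.div2 < n := Nat.binaryRec_decreasing hn.ne'
    simp [hn.ne', hdiv, bits_eq_bodd_cons_bits_div2 hn.ne']

theorem primrec_nat_size : Primrec Nat.size :=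
  (Primrec.list_length.comp primrec_nat_bits).of_eq Nat.size_eq_bits_len

theorem computablePred_forall_mem {l : α → List β} (hl : Computable l) {P : α → β → Prop}
    (hP : ComputablePred fun z : α × β => P z.1 z.2) :
    ComputablePred fun a => ∀ b ∈ l a, P a b := by
  let check (a : α) (i : ℕ) : Bool := ((l a)[i]?.map fun b => decide (P a b)).getD true
  have hcheck : Computable₂ check := by
    have hdecide : Computable₂ fun (z : α × ℕ) b => decide (P z.1 b) :=
      (hP.decide.comp ((Computable.fst.comp Computable.fst).pair Computable.snd)).to₂
    exact ((Computable.option_map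
      (Computable.list_getElem?.comp (hl.comp Computable.fst) Computable.snd) hdecide).option_getD
      (Computable.const true)).to₂
  have hrec : Computable fun a => Nat.rec (motive := fun _ => Bool) true
      (fun i r => r && check a i) (l a).length :=
    Computable.nat_rec (Computable.list_length.comp hl) (Computable.const true)
      (Primrec.and.to_comp.comp (Computable.snd.comp Computable.snd)
        (hcheck.comp Computable.fst (Computable.fst.comp Computable.snd))).to₂
  have hrec_iff (a : α) (n : ℕ) : Nat.rec (motive := fun _ => Bool) true
      (fun i r => r && check a i) n = true ↔ ∀ i < n, check a i = true := by
    induction n with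
    | zero => simp
    | succ n ih => simp only [Bool.and_eq_true, ih, Nat.forall_lt_succ_right]
  refine ComputablePred.computable_iff.2 ⟨_, hrec, funext fun a => propext ?_⟩
  rw [hrec_iff, List.forall_mem_iff_getElem]
  exact forall₂_congr fun i hi => by simp [check, hi]

theorem computablePred_exists_mem {l : α → List β} (hl : Computable l) {P : α → β → Prop}
    (hP : ComputablePred fun z : α × β => P z.1 z.2) :
    ComputablePred fun a => ∃ b ∈ l a, P a b :=
  (computablePred_forall_mem (P := fun a b => ¬P a b) hl hP.not).not.of_eq fun a => by simp

theorem exists_partrec_preimage {e : α → β} (he : Computable e) :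
    ∃ f : β →. α, Partrec f ∧ (∀ b, ∀ a ∈ f b, e a = b) ∧ ∀ a, (f (e a)).Dom := by
  let candidate (b : β) (n : ℕ) : Option α :=
    (Encodable.decode n).bind fun a => bif e a = b then some a else none
  have hcandidate : Computable₂ candidate := by
    refine Computable.option_bind (Computable.decode.comp Computable.snd) ?_
    refine Computable.cond ?_ (Computable.option_some.comp Computable.snd) (Computable.const none)
    exact Primrec.eq.decide.to_comp.comp (he.comp Computable.snd)
      (Computable.fst.comp Computable.fst)
  refine ⟨fun b => Nat.rfindOpt (candidate b), Partrec.rfindOpt hcandidate, ?_, ?_⟩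
  · intro b a ha
    obtain ⟨n, hn⟩ := Nat.rfindOpt_spec ha
    grind
  · exact fun a => Nat.rfindOpt_dom.2 ⟨Encodable.encode a, a, by simp [candidate]⟩

end Computability

/-! ### Binary strings -/

/-- The list of all binary strings of length at most `k`, over which the bounded search in the
computation of `Cwt` runs. -/
def stringsUpTo (k : ℕ) : List BStr :=
  Nat.rec [[]] (fun _ L => [] :: L.flatMap fun p => [false :: p, true :: p]) k

theorem mem_stringsUpTo {k : ℕ} {p : BStr} : p ∈ stringsUpTo k ↔ p.length ≤ k := by
  induction k generalizing p with
  | zero => simp [stringsUpTo]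
  | succ k ih =>
    change p ∈ [] :: (stringsUpTo k).flatMap (fun p => [false :: p, true :: p]) ↔ _
    rcases p with _ | ⟨_ | _, p⟩ <;> simp [ih]

theorem primrec_stringsUpTo : Primrec stringsUpTo := by
  refine Primrec.nat_rec₁ _ (Primrec.list_cons.comp (Primrec.const _) ?_)
  refine Primrec.list_flatMap Primrec.snd ?_
  have hcons (b : Bool) : Primrec fun z : (ℕ × List BStr) × BStr => b :: z.2 :=
    Primrec.list_cons.comp (Primrec.const b) Primrec.snd
  exact Primrec.list_cons.comp (hcons false)
    (Primrec.list_cons.comp (hcons true) (Primrec.const []))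

/-- The two-part code of a program `q` and an index `j`: the string `q` preceded by its length in
self-delimiting form, followed by the binary representation of `j`. -/
def twoPartCode (z : BStr × ℕ) : BStr :=
  List.replicate z.1.length.size true ++ false :: (z.1.length.bits ++ (z.1 ++ z.2.bits))

theorem length_twoPartCode (q : BStr) (j : ℕ) :
    (twoPartCode (q, j)).length = q.length + 2 * q.length.size + j.size + 1 := by
  simp only [twoPartCode, List.length_append, List.length_replicate, List.length_cons,
    Nat.size_eq_bits_len]
  ring

theorem replicate_true_append_false_cons_inj {m n : ℕ} {r s : BStr}
    (h : List.replicate m true ++ false :: r = List.replicate n true ++ false :: s) :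
    m = n ∧ r = s := by
  induction m generalizing n with
  | zero => cases n <;> simp_all [List.replicate_succ]
  | succ m ih =>
    cases n with
    | zero => simp [List.replicate_succ] at h
    | succ n => simpa using ih (by simpa [List.replicate_succ] using h)

theorem twoPartCode_injective : Function.Injective twoPartCode := by
  rintro ⟨q, i⟩ ⟨r, j⟩ h
  obtain ⟨hsize, hrest⟩ := replicate_true_append_false_cons_inj h
  obtain ⟨hlen, hrest⟩ := List.append_inj hrest (by simpa only [Nat.size_eq_bits_len] using hsize)
  obtain ⟨rfl, hbits⟩ := List.append_inj hrest (bits_injective hlen)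
  exact congrArg (Prod.mk q) (bits_injective hbits)

theorem primrec_twoPartCode : Primrec twoPartCode := by
  have hlen : Primrec fun z : BStr × ℕ => z.1.length := Primrec.list_length.comp Primrec.fst
  refine Primrec.list_append.comp
    ((primrec_list_replicate true).comp (primrec_nat_size.comp hlen)) ?_
  refine Primrec.list_cons.comp (Primrec.const false) ?_
  exact Primrec.list_append.comp (primrec_nat_bits.comp hlen)
    (Primrec.list_append.comp Primrec.fst (primrec_nat_bits.comp Primrec.snd))

/-! ### Plain and time-bounded complexity -/

theorem iInf_length_le_iff {P : BStr → Prop} {k : ℕ} :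
    (⨅ (p : BStr) (_ : P p), (p.length : ℕ∞)) ≤ k ↔ ∃ p, P p ∧ p.length ≤ k := by
  rw [← ENat.lt_natCast_add_one_iff]
  simp only [iInf_lt_iff, ENat.lt_natCast_add_one_iff, Nat.cast_le, exists_prop]

section Complexity

variable {D : BStr →. BStr}

theorem Cw_le_iff {x : BStr} {k : ℕ} : Cw D x ≤ k ↔ ∃ p, x ∈ D p ∧ p.length ≤ k :=
  iInf_length_le_iff

theorem Cwt_le_iff {ev : ℕ → BStr → Option BStr} {t : ℕ} {x : BStr} {k : ℕ} :
    Cwt ev t x ≤ k ↔ ∃ p, ev t p = some x ∧ p.length ≤ k :=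
  iInf_length_le_iff

theorem finite_setOf_Cw_le (D : BStr →. BStr) (k : ℕ) : {x | Cw D x ≤ k}.Finite := by
  have hsub : {x | Cw D x ≤ k} ⊆ ⋃ p ∈ {p : BStr | p.length ≤ k}, {x | x ∈ D p} := by
    intro x hx
    obtain ⟨p, hp, hlen⟩ := Cw_le_iff.1 hx
    exact Set.mem_biUnion hlen hp
  refine ((List.finite_length_le Bool k).biUnion fun p _ => ?_).subset hsub
  exact Set.Subsingleton.finite fun x hx y hy => Part.mem_unique hx hy

theorem bddAbove_setOf_Cw_bits_le (D : BStr →. BStr) (k : ℕ) :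
    BddAbove {m : ℕ | Cw D m.bits ≤ k} :=
  ((finite_setOf_Cw_le D k).preimage bits_injective.injOn).bddAbove

theorem le_B {m k : ℕ} (h : Cw D m.bits ≤ k) : m ≤ B D k :=
  le_csSup (bddAbove_setOf_Cw_bits_le D k) h

theorem B_mono : Monotone (B D) := fun _ k' h =>
  csSup_le_csSup' (bddAbove_setOf_Cw_bits_le D k') fun m (hm : Cw D m.bits ≤ _) =>
    hm.trans (Nat.cast_le.2 h)

namespace OptimalDM

variable {α : Type*} [Primcodable α]

theorem exists_Cw_le_of_code (hD : OptimalDM D) {code : α → BStr} (hcode : Computable code)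
    (hinj : Function.Injective code) {G : α →. BStr} (hG : Partrec G) :
    ∃ c : ℕ, ∀ a, ∀ x ∈ G a, Cw D x ≤ ((code a).length + c : ℕ) := by
  obtain ⟨f, hf, hf_code, hf_dom⟩ := exists_partrec_preimage hcode
  obtain ⟨c, hc⟩ := hD.2 (fun p => (f p).bind G) (hf.bind (hG.comp Computable.snd).to₂)
  refine ⟨c, fun a x hx => (hc x).trans ?_⟩
  have ha : a ∈ f (code a) := by
    obtain ⟨a', ha'⟩ := Part.dom_iff_mem.1 (hf_dom a)
    rwa [hinj (hf_code _ _ ha')] at ha'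
  rw [Nat.cast_add]
  gcongr
  exact Cw_le_iff.2 ⟨code a, Part.mem_bind ha hx, le_rfl⟩

theorem coe_C (hD : OptimalDM D) (x : BStr) : (C D x : ℕ∞) = Cw D x := by
  obtain ⟨c, hc⟩ := hD.exists_Cw_le_of_code Computable.id Function.injective_id Partrec.some
  exact ENat.natCast_toNat (ne_top_of_le_ne_top (ENat.natCast_ne_top _) (hc x x (Part.mem_some x)))

theorem exists_program_length_le_C (hD : OptimalDM D) (x : BStr) :
    ∃ p, x ∈ D p ∧ p.length ≤ C D x :=
  Cw_le_iff.1 (hD.coe_C x).ge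

theorem exists_Cw_le_of_mem_list (hD : OptimalDM D) {F : BStr →. List BStr} (hF : Partrec F) :
    ∃ c : ℕ, ∀ q, ∀ l ∈ F q, ∀ x ∈ l,
      Cw D x ≤ (q.length + 2 * q.length.size + l.length.size + c : ℕ) := by
  have hG : Partrec fun z : BStr × ℕ => (F z.1).bind fun l => (l[z.2]? : Part BStr) :=
    (hF.comp Computable.fst).bind (Computable.list_getElem?.comp Computable.snd
      (Computable.snd.comp Computable.fst)).ofOption
  obtain ⟨c, hc⟩ := hD.exists_Cw_le_of_code primrec_twoPartCode.to_comp twoPartCode_injective hG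
  refine ⟨c + 1, fun q l hl x hx => ?_⟩
  obtain ⟨j, hj, rfl⟩ := List.mem_iff_getElem.1 hx
  refine (hc (q, j) l[j] (Part.mem_bind hl (by simp [hj]))).trans ?_
  rw [length_twoPartCode]
  have := Nat.size_le_size hj.le
  exact_mod_cast (by omega)

end OptimalDM

namespace TimedDM

variable {α : Type*} [Primcodable α]

theorem Cwt_antitone (T : TimedDM D) (x : BStr) : Antitone fun t => Cwt T.ev t x :=
  fun _ _ h => iInf_mono fun _ => iInf_mono' fun hp => ⟨T.mono h hp, le_rfl⟩

theorem eventually_Cwt_le (T : TimedDM D) {x : BStr} {k : ℕ} (h : Cw D x ≤ k) :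
    ∀ᶠ t in Filter.atTop, Cwt T.ev t x ≤ k := by
  obtain ⟨p, hp, hlen⟩ := Cw_le_iff.1 h
  obtain ⟨t, ht⟩ := (T.spec p x).1 hp
  filter_upwards [Filter.eventually_ge_atTop t] with t' htt'
  exact Cwt_le_iff.2 ⟨p, T.mono htt' ht, hlen⟩

theorem computablePred_Cwt_le (T : TimedDM D) :
    ComputablePred fun z : ℕ × BStr × ℕ => Cwt T.ev z.1 z.2.1 ≤ z.2.2 := by
  have hsearch : ComputablePred fun z : ℕ × BStr × ℕ =>
      ∃ p ∈ stringsUpTo z.2.2, T.ev z.1 p = some z.2.1 := by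
    refine computablePred_exists_mem
      (primrec_stringsUpTo.to_comp.comp (Computable.snd.comp Computable.snd)) ?_
    exact (Primrec.eq.decide.to_comp.comp
      (T.computable.comp (Computable.fst.comp Computable.fst) Computable.snd)
      (Computable.option_some.comp
        (Computable.fst.comp (Computable.snd.comp Computable.fst)))).computablePred
  exact hsearch.of_eq fun z => by simp only [Cwt_le_iff, mem_stringsUpTo, and_comm]

theorem exists_partrec_forall_Cwt_le (T : TimedDM D) {l : α → List BStr} (hl : Computable l)
    {k : α → ℕ} (hk : Computable k) :
    ∃ f : α →. ℕ, Partrec f ∧ ∀ a, (∀ x ∈ l a, Cw D x ≤ k a) →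
      ∃ t ∈ f a, ∀ x ∈ l a, Cwt T.ev t x ≤ k a := by
  have hpred : ComputablePred fun z : α × ℕ => ∀ x ∈ l z.1, Cwt T.ev z.2 x ≤ k z.1 := by
    refine computablePred_forall_mem (hl.comp Computable.fst) ?_
    exact (T.computablePred_Cwt_le.decide.comp ((Computable.snd.comp Computable.fst).pair
      (Computable.snd.pair (hk.comp (Computable.fst.comp Computable.fst))))).computablePred
  refine ⟨fun a => Nat.rfind fun t => Part.some (decide (∀ x ∈ l a, Cwt T.ev t x ≤ k a)),
    Partrec.rfind hpred.decide.partrec, fun a ha => ?_⟩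
  have hev : ∀ᶠ t in Filter.atTop, ∀ x ∈ l a, Cwt T.ev t x ≤ k a :=
    (Filter.eventually_all_finite (l a).finite_toSet).2 fun x hx => T.eventually_Cwt_le (ha x hx)
  obtain ⟨t₀, ht₀⟩ := hev.exists
  obtain ⟨t, ht, -⟩ := Nat.rfind_min' (p := fun t => decide (∀ x ∈ l a, Cwt T.ev t x ≤ k a))
    (decide_eq_true ht₀)
  exact ⟨t, ht, of_decide_eq_true (by simpa using Nat.rfind_spec ht)⟩

end TimedDM

/-! ### Two-part descriptions -/

theorem SetEncoding.exists_partrec_listing {enc : Finset BStr → BStr} (henc : SetEncoding enc)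
    (hD : Partrec D) :
    ∃ F : BStr →. List BStr, Partrec F ∧ ∀ q S, enc S ∈ D q →
      ∃ l ∈ F q, l.Nodup ∧ l.toFinset = S := by
  obtain ⟨f, hf, hf_enc, hf_dom⟩ := exists_partrec_preimage henc.2
  refine ⟨fun q => ((D q).bind f).map List.dedup,
    (hD.bind (hf.comp Computable.snd).to₂).map
      (primrec_list_dedup.to_comp.comp Computable.snd).to₂, fun q S hS => ?_⟩
  obtain ⟨l, hl⟩ := Part.dom_iff_mem.1 (hf_dom S.toList)
  rw [Finset.toList_toFinset] at hl
  refine ⟨l.dedup, Part.mem_map _ (Part.mem_bind hS hl), l.nodup_dedup, ?_⟩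
  rw [← henc.1 (hf_enc _ _ hl)]
  ext x
  simp only [List.mem_toFinset, List.mem_dedup]

theorem exists_Cwt_B_le (hD : OptimalDM D) (T : TimedDM D) {enc : Finset BStr → BStr}
    (henc : SetEncoding enc) :
    ∃ c : ℕ, ∀ S, ∀ x ∈ S, Cwt T.ev (B D (C D (enc S) + c)) x ≤
      (C D (enc S) + 2 * (C D (enc S)).size + S.card.size + c : ℕ) := by
  obtain ⟨F, hF, hF_list⟩ := henc.exists_partrec_listing hD.1
  obtain ⟨c₁, hc₁⟩ := hD.exists_Cw_le_of_mem_list hF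
  let bound (z : BStr × List BStr) : ℕ :=
    z.1.length + 2 * z.1.length.size + z.2.length.size + c₁
  have hbound : Computable bound := by
    have hlen : Primrec fun z : BStr × List BStr => z.1.length :=
      Primrec.list_length.comp Primrec.fst
    have hsize : Primrec fun z : BStr × List BStr => 2 * z.1.length.size :=
      Primrec.nat_double.comp (primrec_nat_size.comp hlen)
    have hcard : Primrec fun z : BStr × List BStr => z.2.length.size :=
      primrec_nat_size.comp (Primrec.list_length.comp Primrec.snd)
    exact (Primrec.nat_add.comp (Primrec.nat_add.comp (Primrec.nat_add.comp hlen hsize) hcard)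
      (Primrec.const c₁)).to_comp
  obtain ⟨f, hf, hf_time⟩ := T.exists_partrec_forall_Cwt_le Computable.snd hbound
  have htime : Partrec fun q => (F q).bind fun l => (f (q, l)).map Nat.bits :=
    hF.bind (hf.map (primrec_nat_bits.to_comp.comp Computable.snd).to₂)
  obtain ⟨c₂, hc₂⟩ := hD.exists_Cw_le_of_code Computable.id Function.injective_id htime
  refine ⟨c₁ + c₂, fun S x hx => ?_⟩
  obtain ⟨q, hq, hq_len⟩ := hD.exists_program_length_le_C (enc S)
  obtain ⟨l, hl, hnodup, rfl⟩ := hF_list q S hq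
  obtain ⟨t, ht, ht_le⟩ := hf_time (q, l) (hc₁ q l hl)
  have ht_B : t ≤ B D (C D (enc l.toFinset) + (c₁ + c₂)) := by
    refine le_B ((hc₂ q t.bits (Part.mem_bind hl (Part.mem_map _ ht))).trans ?_)
    exact Nat.cast_le.2 (by simp only [id_eq]; omega)
  refine (T.Cwt_antitone x ht_B).trans ((ht_le x (List.mem_toFinset.1 hx)).trans ?_)
  have hsize := Nat.size_le_size hq_len
  rw [List.toFinset_card_of_nodup hnodup]
  exact Nat.cast_le.2 (by simp only [bound]; omega)

theorem size_le_one_add_logb {m : ℕ} (hm : 0 < m) : (m.size : ℝ) ≤ 1 + Real.logb 2 m := by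
  have hsize : 0 < m.size := Nat.size_pos.2 hm
  have hpow : 2 ^ (m.size - 1) ≤ m := Nat.lt_size.1 (by omega)
  have hlog : ((m.size - 1 : ℕ) : ℝ) ≤ Real.logb 2 m := by
    rw [Real.le_logb_iff_rpow_le one_lt_two (by exact_mod_cast hm), Real.rpow_natCast]
    exact_mod_cast hpow
  rw [Nat.cast_pred hsize] at hlog
  linarith

theorem one_le_logb_add_two (n : ℕ) : 1 ≤ Real.logb 2 ((n : ℝ) + 2) := by
  rw [Real.le_logb_iff_rpow_le one_lt_two (by positivity), Real.rpow_one]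
  exact le_add_of_nonneg_left n.cast_nonneg

theorem le_ceil_mul_of_one_le {c : ℕ} {r : ℝ} (hr : 1 ≤ r) : c ≤ ⌈(c : ℝ) * r⌉₊ := by
  exact_mod_cast (le_mul_of_one_le_right c.cast_nonneg hr).trans (Nat.le_ceil _)

theorem stmt1_general (hD : OptimalDM D) (T : TimedDM D) {enc : Finset BStr → BStr}
    (henc : SetEncoding enc) :
    ∃ c : ℕ, 0 < c ∧ ∀ S, ∀ x ∈ S, ∃ p : BStr,
      T.ev (B D (C D (enc S) + c)) p = some x ∧
      (p.length : ℝ) ≤ (C D (enc S) : ℝ) + Real.logb 2 (S.card : ℝ)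
        + (c : ℝ) * Real.logb 2 ((C D (enc S) : ℝ) + 2) := by
  obtain ⟨c, hc⟩ := exists_Cwt_B_le hD T henc
  refine ⟨c + 5, by omega, fun S x hx => ?_⟩
  obtain ⟨p, hp, hlen⟩ := Cwt_le_iff.1 (hc S x hx)
  refine ⟨p, T.mono (B_mono (by omega)) hp, ?_⟩
  set k := C D (enc S)
  have hk : (k.size : ℝ) ≤ 1 + Real.logb 2 ((k : ℝ) + 2) := by
    have hmono : (k.size : ℝ) ≤ (k + 2).size := mod_cast Nat.size_le_size (by omega)
    simpa using hmono.trans (size_le_one_add_logb (by omega))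
  have hcard : (S.card.size : ℝ) ≤ 1 + Real.logb 2 S.card :=
    size_le_one_add_logb (Finset.card_pos.2 ⟨x, hx⟩)
  have hlog := one_le_logb_add_two k
  calc (p.length : ℝ) ≤ k + 2 * k.size + S.card.size + c := mod_cast hlen
    _ ≤ k + Real.logb 2 S.card + 2 * Real.logb 2 ((k : ℝ) + 2) + (c + 3) * 1 := by linarith
    _ ≤ k + Real.logb 2 S.card + 2 * Real.logb 2 ((k : ℝ) + 2)
          + (c + 3) * Real.logb 2 ((k : ℝ) + 2) := by gcongr
    _ = k + Real.logb 2 S.card + ((c + 5 : ℕ) : ℝ) * Real.logb 2 ((k : ℝ) + 2) := by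
      push_cast
      ring

end Complexity

/-- A two-part description based on a model `S` of complexity `k` can be
converted into a program of essentially the same total length that halts
within time `B(k + O(log n))`. -/
theorem stmt1 (D : BStr →. BStr) (hD : OptimalDM D) (T : TimedDM D)
    (enc : Finset BStr → BStr) (henc : SetEncoding enc) :
    ∃ c : ℕ, 0 < c ∧ ∀ n : ℕ, ∀ x : BStr, x.length = n →
      ∀ S : Finset BStr, x ∈ S → C D (enc S) ≤ n →
      ∃ p : BStr,
        T.ev (B D (C D (enc S) + ⌈(c : ℝ) * Real.logb 2 ((n : ℝ) + 2)⌉₊)) p = some x ∧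
        (p.length : ℝ) ≤ (C D (enc S) : ℝ) + Real.logb 2 (S.card : ℝ)
          + (c : ℝ) * Real.logb 2 ((n : ℝ) + 2) := by
  obtain ⟨c, hc, h⟩ := stmt1_general hD T henc
  refine ⟨c, hc, fun n x _ S hxS hSn => ?_⟩
  obtain ⟨p, hp, hlen⟩ := h S x hxS
  have htime : c ≤ ⌈(c : ℝ) * Real.logb 2 ((n : ℝ) + 2)⌉₊ :=
    le_ceil_mul_of_one_le (one_le_logb_add_two n)
  refine ⟨p, T.mono (B_mono (by gcongr)) hp, hlen.trans ?_⟩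
  gcongr
  exact one_lt_two
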